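/- arXiv:1909.05796 — 2 statements merged into one kernel-verified Lean document; each statement's English description precedes it below -/
import Mathlib

section
/- Suppose the distinct complex numbers α₁, α₂, α₃ are vertices of an equilateral triangle, i.e. exactly one of α₁e₁+α₂e₂+α₃e₃ = 0 and α₁e₂+α₂e₁+α₃e₃ = 0 holds. Then 3(9c−ab) = 27c−a³ ≠ 0 and (b²−3ac)/(9c−ab) = −a/3. Moreover, −a/3 = v* if α₁e₁+α₂e₂+α₃e₃ = 0, and −a/3 = u* if α₁e₂+α₂e₁+α₃e₃ = 0. -/
/-!
Let `P = α₁ * e₁ + α₂ * e₂ + α₃ * e₃` and let `Q` be `P` with `e₁` and `e₂` interchanged. Since the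
`eᵢ` are the roots of some `X ^ 3 - k`, these are, up to scaling, the two nontrivial Lagrange
resolvents of `α₁, α₂, α₃`. Hence `P * Q` and `P ^ 3 + Q ^ 3` are, up to powers of `e₃`, the
symmetric functions `a ^ 2 - 3 * b` and `-(2 * a ^ 3 - 9 * a * b + 27 * c)`. If exactly one
resolvent vanishes, the product is zero and the sum of cubes is not, so `a ^ 2 = 3 * b` and
`27 * c - a ^ 3 ≠ 0`. The values of `u` and `v` come from an expression for `P ^ 2` that is linear
in `Q` and in the numerator of `v`.
-/

section CommRing

variable {R : Type*} [CommRing R] {e₁ e₂ e₃ : R}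

/-- The Lagrange resolvent of `x, y, z`, up to scaling, when `e₁, e₂, e₃` are the roots of a
polynomial `X ^ 3 - k`; its vanishing expresses that `x, y, z` form an equilateral triangle of one
of the two orientations. The other nontrivial resolvent is obtained by interchanging `e₁` and `e₂`.
The weights are arbitrary arguments, so that the numerators of `u` and `v` are also of this form. -/
def lagrangeResolvent (e₁ e₂ e₃ x y z : R) : R :=
  x * e₁ + y * e₂ + z * e₃

theorem lagrangeResolvent_mul_swap (hsum : e₁ + e₂ + e₃ = 0)
    (hpair : e₁ * e₂ + e₁ * e₃ + e₂ * e₃ = 0) (x y z : R) :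
    lagrangeResolvent e₁ e₂ e₃ x y z * lagrangeResolvent e₂ e₁ e₃ x y z =
      e₃ ^ 2 * ((x + y + z) ^ 2 - 3 * (x * y + x * z + y * z)) := by
  unfold lagrangeResolvent
  linear_combination (x ^ 2 + y ^ 2) * (hpair - e₃ * hsum) +
    x * y * ((e₁ + e₂ + e₃) * hsum - 2 * hpair) + (x + y) * z * e₃ * hsum

theorem lagrangeResolvent_pow_three_add_swap (hsum : e₁ + e₂ + e₃ = 0)
    (hpair : e₁ * e₂ + e₁ * e₃ + e₂ * e₃ = 0) (x y z : R) :
    lagrangeResolvent e₁ e₂ e₃ x y z ^ 3 + lagrangeResolvent e₂ e₁ e₃ x y z ^ 3 =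
      e₃ ^ 3 * (2 * (x + y + z) ^ 3 - 9 * (x + y + z) * (x * y + x * z + y * z) +
        27 * (x * y * z)) := by
  set P := lagrangeResolvent e₁ e₂ e₃ x y z
  set Q := lagrangeResolvent e₂ e₁ e₃ x y z
  have hadd : P + Q = e₃ * (2 * z - x - y) := by
    unfold P Q lagrangeResolvent
    linear_combination (x + y) * hsum
  calc
    P ^ 3 + Q ^ 3 = (P + Q) ^ 3 - 3 * (P * Q) * (P + Q) := by ring
    _ = _ := by rw [hadd, lagrangeResolvent_mul_swap hsum hpair]; ring

theorem lagrangeResolvent_sq (hsum : e₁ + e₂ + e₃ = 0)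
    (hpair : e₁ * e₂ + e₁ * e₃ + e₂ * e₃ = 0) (x y z : R) :
    lagrangeResolvent e₁ e₂ e₃ x y z ^ 2 =
      e₃ * ((x + y + z) * lagrangeResolvent e₂ e₁ e₃ x y z +
        3 * lagrangeResolvent e₃ e₁ e₂ (x * y) (x * z) (y * z)) := by
  unfold lagrangeResolvent
  linear_combination x ^ 2 * (e₁ * hsum - hpair) + y ^ 2 * (e₂ * hsum - hpair) +
    x * y * (2 * hpair - 3 * e₃ * hsum) - (x + y) * z * e₃ * hsum

theorem three_mul_nine_mul_sub_mul {a b : R} (hab : a ^ 2 = 3 * b) (c : R) :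
    3 * (9 * c - a * b) = 27 * c - a ^ 3 := by
  linear_combination a * hab

end CommRing

section NoZeroDivisors

variable {R : Type*} [CommRing R] [NoZeroDivisors R] {e₁ e₂ e₃ x y z : R}

theorem pow_three_add_ne_zero_of_xor {p q : R} (h : Xor (p = 0) (q = 0)) :
    p ^ 3 + q ^ 3 ≠ 0 := by
  rcases h with ⟨rfl, hq⟩ | ⟨rfl, hp⟩
  · simpa using hq
  · simpa using hp

theorem ne_zero_of_xor_lagrangeResolvent (hsum : e₁ + e₂ + e₃ = 0)
    (hpair : e₁ * e₂ + e₁ * e₃ + e₂ * e₃ = 0)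
    (h : Xor (lagrangeResolvent e₁ e₂ e₃ x y z = 0) (lagrangeResolvent e₂ e₁ e₃ x y z = 0)) :
    e₃ ≠ 0 := by
  have hcubes := pow_three_add_ne_zero_of_xor h
  rw [lagrangeResolvent_pow_three_add_swap hsum hpair] at hcubes
  exact ne_zero_pow three_ne_zero (left_ne_zero_of_mul hcubes)

theorem sum_sq_eq_of_xor_lagrangeResolvent (hsum : e₁ + e₂ + e₃ = 0)
    (hpair : e₁ * e₂ + e₁ * e₃ + e₂ * e₃ = 0)
    (h : Xor (lagrangeResolvent e₁ e₂ e₃ x y z = 0) (lagrangeResolvent e₂ e₁ e₃ x y z = 0)) :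
    (x + y + z) ^ 2 = 3 * (x * y + x * z + y * z) := by
  have he₃ := ne_zero_of_xor_lagrangeResolvent hsum hpair h
  have hprod := mul_eq_zero.mpr h.or
  rw [lagrangeResolvent_mul_swap hsum hpair] at hprod
  exact sub_eq_zero.mp ((mul_eq_zero.mp hprod).resolve_left (pow_ne_zero 2 he₃))

theorem sum_pow_three_ne_of_xor_lagrangeResolvent (hsum : e₁ + e₂ + e₃ = 0)
    (hpair : e₁ * e₂ + e₁ * e₃ + e₂ * e₃ = 0)
    (h : Xor (lagrangeResolvent e₁ e₂ e₃ x y z = 0) (lagrangeResolvent e₂ e₁ e₃ x y z = 0)) :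
    (x + y + z) ^ 3 ≠ 27 * (x * y * z) := by
  intro heq
  have hsq := sum_sq_eq_of_xor_lagrangeResolvent hsum hpair h
  apply pow_three_add_ne_zero_of_xor h
  rw [lagrangeResolvent_pow_three_add_swap hsum hpair]
  linear_combination e₃ ^ 3 * (3 * (x + y + z) * hsq - heq)

end NoZeroDivisors

section Field

variable {K : Type*} [Field K] {e₁ e₂ e₃ : K}

theorem sq_sub_div_eq_neg_div_three {a b c : K} (hab : a ^ 2 = 3 * b)
    (hne : 27 * c - a ^ 3 ≠ 0) :
    (b ^ 2 - 3 * a * c) / (9 * c - a * b) = -a / 3 := by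
  rw [← three_mul_nine_mul_sub_mul hab] at hne
  rw [div_eq_div_iff (right_ne_zero_of_mul hne) (left_ne_zero_of_mul hne)]
  linear_combination -b * hab

theorem sum_div_three_eq_of_lagrangeResolvent_eq_zero (hsum : e₁ + e₂ + e₃ = 0)
    (hpair : e₁ * e₂ + e₁ * e₃ + e₂ * e₃ = 0) (h3 : (3 : K) ≠ 0) {x y z : K}
    (hzero : lagrangeResolvent e₁ e₂ e₃ x y z = 0)
    (hne : lagrangeResolvent e₂ e₁ e₃ x y z ≠ 0) :
    (x + y + z) / 3 =
      -(lagrangeResolvent e₃ e₁ e₂ (x * y) (x * z) (y * z) /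
        lagrangeResolvent e₂ e₁ e₃ x y z) := by
  have he₃ : e₃ ≠ 0 := ne_zero_of_xor_lagrangeResolvent hsum hpair (.inl ⟨hzero, hne⟩)
  have hsq := lagrangeResolvent_sq hsum hpair x y z
  rw [hzero, zero_pow two_ne_zero, eq_comm, mul_eq_zero, or_iff_right he₃] at hsq
  rw [← neg_div, div_eq_div_iff h3 hne]
  linear_combination hsq

theorem stmt_3_general (α₁ α₂ α₃ a b c u v : K)
    (hsum : e₁ + e₂ + e₃ = 0) (hpair : e₁ * e₂ + e₁ * e₃ + e₂ * e₃ = 0)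
    (ha : a = -(α₁ + α₂ + α₃))
    (hb : b = α₁ * α₂ + α₁ * α₃ + α₂ * α₃)
    (hc : c = -(α₁ * α₂ * α₃))
    (hu : u = -(lagrangeResolvent e₃ e₂ e₁ (α₁ * α₂) (α₁ * α₃) (α₂ * α₃) /
      lagrangeResolvent e₁ e₂ e₃ α₁ α₂ α₃))
    (hv : v = -(lagrangeResolvent e₃ e₁ e₂ (α₁ * α₂) (α₁ * α₃) (α₂ * α₃) /
      lagrangeResolvent e₂ e₁ e₃ α₁ α₂ α₃))
    (hequi : Xor (lagrangeResolvent e₁ e₂ e₃ α₁ α₂ α₃ = 0)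
      (lagrangeResolvent e₂ e₁ e₃ α₁ α₂ α₃ = 0)) :
    3 * (9 * c - a * b) = 27 * c - a ^ 3 ∧
    27 * c - a ^ 3 ≠ 0 ∧
    (b ^ 2 - 3 * a * c) / (9 * c - a * b) = -a / 3 ∧
    (lagrangeResolvent e₁ e₂ e₃ α₁ α₂ α₃ = 0 → -a / 3 = v) ∧
    (lagrangeResolvent e₂ e₁ e₃ α₁ α₂ α₃ = 0 → -a / 3 = u) := by
  have hab : a ^ 2 = 3 * b := by
    rw [ha, hb, neg_sq, sum_sq_eq_of_xor_lagrangeResolvent hsum hpair hequi]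
  have hne : 27 * c - a ^ 3 ≠ 0 := fun h ↦
    sum_pow_three_ne_of_xor_lagrangeResolvent hsum hpair hequi (by
      rw [ha, hc] at h
      linear_combination h)
  have hmul := three_mul_nine_mul_sub_mul hab c
  have h3 : (3 : K) ≠ 0 := left_ne_zero_of_mul (hmul ▸ hne)
  refine ⟨hmul, hne, sq_sub_div_eq_neg_div_three hab hne, fun hP ↦ ?_, fun hQ ↦ ?_⟩
  · have hQ : lagrangeResolvent e₂ e₁ e₃ α₁ α₂ α₃ ≠ 0 := (xor_iff_iff_not.mp hequi).mp hP
    rw [ha, hv, neg_neg, sum_div_three_eq_of_lagrangeResolvent_eq_zero hsum hpair h3 hP hQ]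
  · have hP : lagrangeResolvent e₁ e₂ e₃ α₁ α₂ α₃ ≠ 0 := (xor_iff_not_iff'.mp hequi).mpr hQ
    rw [ha, hu, neg_neg, sum_div_three_eq_of_lagrangeResolvent_eq_zero
      (by rwa [add_comm e₂]) (by linear_combination hpair) h3 hQ hP]

end Field

theorem exp_neg_pi_div_three_add_exp_pi_div_three :
    Complex.exp (-(Real.pi : ℂ) / 3 * Complex.I) + Complex.exp ((Real.pi : ℂ) / 3 * Complex.I) =
      1 := by
  have hcos : Complex.cos ((Real.pi : ℂ) / 3) = 1 / 2 := by
    simpa only [Complex.ofReal_cos, Complex.ofReal_div, Complex.ofReal_one, Complex.ofReal_ofNat]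
      using congrArg Complex.ofReal Real.cos_pi_div_three
  rw [add_comm, neg_div, ← Complex.two_cos, hcos, mul_one_div_cancel two_ne_zero]

theorem exp_neg_pi_div_three_mul_exp_pi_div_three :
    Complex.exp (-(Real.pi : ℂ) / 3 * Complex.I) * Complex.exp ((Real.pi : ℂ) / 3 * Complex.I) =
      1 := by
  rw [← Complex.exp_add, neg_div, neg_mul, neg_add_cancel, Complex.exp_zero]

theorem stmt_3 (α₁ α₂ α₃ e₁ e₂ e₃ a b c u v : ℂ)
    (he₁ : e₁ = Complex.exp (-(Real.pi : ℂ) / 3 * Complex.I))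
    (he₂ : e₂ = Complex.exp ((Real.pi : ℂ) / 3 * Complex.I))
    (he₃ : e₃ = -1)
    (h12 : α₁ ≠ α₂) (h13 : α₁ ≠ α₃) (h23 : α₂ ≠ α₃)
    (ha : a = -(α₁ + α₂ + α₃))
    (hb : b = α₁ * α₂ + α₁ * α₃ + α₂ * α₃)
    (hc : c = -(α₁ * α₂ * α₃))
    (hu : u = -((α₁ * α₂ * e₃ + α₁ * α₃ * e₂ + α₂ * α₃ * e₁) /
      (α₁ * e₁ + α₂ * e₂ + α₃ * e₃)))
    (hv : v = -((α₁ * α₂ * e₃ + α₁ * α₃ * e₁ + α₂ * α₃ * e₂) /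
      (α₁ * e₂ + α₂ * e₁ + α₃ * e₃)))
    (hequi : Xor' (α₁ * e₁ + α₂ * e₂ + α₃ * e₃ = 0)
      (α₁ * e₂ + α₂ * e₁ + α₃ * e₃ = 0)) :
    3 * (9 * c - a * b) = 27 * c - a ^ 3 ∧
    27 * c - a ^ 3 ≠ 0 ∧
    (b ^ 2 - 3 * a * c) / (9 * c - a * b) = -a / 3 ∧
    (α₁ * e₁ + α₂ * e₂ + α₃ * e₃ = 0 → -a / 3 = v) ∧
    (α₁ * e₂ + α₂ * e₁ + α₃ * e₃ = 0 → -a / 3 = u) := by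
  have hadd : e₁ + e₂ = 1 := he₁ ▸ he₂ ▸ exp_neg_pi_div_three_add_exp_pi_div_three
  have hmul : e₁ * e₂ = 1 := he₁ ▸ he₂ ▸ exp_neg_pi_div_three_mul_exp_pi_div_three
  exact stmt_3_general α₁ α₂ α₃ a b c u v (by linear_combination hadd + he₃)
    (by linear_combination hmul - hadd + (e₁ + e₂) * he₃) ha hb hc hu hv hequi
end

section
/- For every z ∈ ℂ with 2(a²−3b)z + (ab−9c) ≠ 0, the following identities hold: a·G(z)² + 2b·G(z) + 3c = −3Δ·(az²+2bz+3c)/(2(a²−3b)z+(ab−9c))², and 3·G(z)² + 2a·G(z) + b = −3Δ·(3z²+2az+b)/(2(a²−3b)z+(ab−9c))². Consequently, if additionally 3z² + 2az + b ≠ 0, then Q(G(z)) = Q(z). Moreover, if α₁, α₂, α₃ are not vertices of an equilateral triangle, then G(u*) = u* and G(v*) = v*. -/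
/-!
The rational map `Q` is minus the ratio of the two partial derivatives of the homogenized cubic
`z³ + a z² w + b z w² + c w³`, and `G` sends `z` to its harmonic conjugate with respect to the two
roots of the Hessian `(a² - 3b) z² + (ab - 9c) z + (b² - 3ca)`. Both partial derivatives are apolar
to the Hessian, and harmonic conjugation multiplies every form apolar to the Hessian by one and the
same factor, its discriminant `-3Δ` over the square of the denominator of `G`; hence
`Q ∘ G = Q`. As `Δ ≠ 0`, the fixed points of `G` are the roots of the Hessian, which splits into two
linear factors whose coefficients are Lagrange resolvents of the roots of the cubic and of their
pairwise products.
-/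

section HarmonicConjugate

/-- Apolarity of the quadratics `A z² + B z + C` and `p z² + q z + r`, that is, orthogonality for
the polarization of the discriminant. When both split, it says that their root pairs are
harmonic. -/
def Apolar {R : Type*} [CommRing R] (A B C p q r : R) : Prop :=
  2 * A * r - B * q + 2 * C * p = 0

variable {K : Type*} [Field K] {A B C z : K}

/-- The harmonic conjugate of `z` with respect to the roots of `A z² + B z + C`, written without
reference to these roots. The point at infinity is not modelled: where `2 A z + B = 0` the value
is the junk value `0`. -/
def harmonicConjugate (A B C z : K) : K :=
  -((B * z + 2 * C) / (2 * A * z + B))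

theorem Apolar.eval_harmonicConjugate {p q r : K} (h : Apolar A B C p q r)
    (hz : 2 * A * z + B ≠ 0) :
    p * harmonicConjugate A B C z ^ 2 + q * harmonicConjugate A B C z + r =
      discrim A B C * (p * z ^ 2 + q * z + r) / (2 * A * z + B) ^ 2 := by
  rw [Apolar] at h
  have hmul : harmonicConjugate A B C z * (2 * A * z + B) = -(B * z + 2 * C) := by
    rw [harmonicConjugate, neg_mul, div_mul_cancel₀ _ hz]
  rw [eq_div_iff (pow_ne_zero 2 hz)]
  calc
    _ = p * (harmonicConjugate A B C z * (2 * A * z + B)) ^ 2 +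
          q * (harmonicConjugate A B C z * (2 * A * z + B)) * (2 * A * z + B) +
          r * (2 * A * z + B) ^ 2 := by ring
    _ = discrim A B C * (p * z ^ 2 + q * z + r) := by
      rw [hmul, discrim]
      linear_combination 2 * (A * z ^ 2 + B * z + C) * h

theorem Apolar.div_eval_harmonicConjugate {p q r p' q' r' : K} (h : Apolar A B C p q r)
    (h' : Apolar A B C p' q' r') (hdisc : discrim A B C ≠ 0) (hz : 2 * A * z + B ≠ 0) :
    (p * harmonicConjugate A B C z ^ 2 + q * harmonicConjugate A B C z + r) /
        (p' * harmonicConjugate A B C z ^ 2 + q' * harmonicConjugate A B C z + r') =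
      (p * z ^ 2 + q * z + r) / (p' * z ^ 2 + q' * z + r') := by
  rw [h.eval_harmonicConjugate hz, h'.eval_harmonicConjugate hz,
    div_div_div_cancel_right₀ (pow_ne_zero 2 hz), mul_div_mul_left _ _ hdisc]

theorem harmonicConjugate_eq_self_of_root (hdisc : discrim A B C ≠ 0)
    (hz : A * (z * z) + B * z + C = 0) : harmonicConjugate A B C z = z := by
  have hden : 2 * A * z + B ≠ 0 := by
    rwa [discrim_eq_sq_of_quadratic_eq_zero hz, pow_ne_zero_iff two_ne_zero] at hdisc
  rw [harmonicConjugate, ← neg_div, div_eq_iff hden]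
  linear_combination -2 * hz

end HarmonicConjugate

section Hessian

variable {R : Type*} [CommRing R] (P : Cubic R)

theorem discrim_hessian :
    discrim (P.b ^ 2 - 3 * P.c * P.a) (P.b * P.c - 9 * P.d * P.a) (P.c ^ 2 - 3 * P.d * P.b) =
      -(3 * P.discr) := by
  rw [discrim, Cubic.discr]
  ring

theorem apolar_hessian_partialX :
    Apolar (P.b ^ 2 - 3 * P.c * P.a) (P.b * P.c - 9 * P.d * P.a) (P.c ^ 2 - 3 * P.d * P.b)
      (3 * P.a) (2 * P.b) P.c := by
  rw [Apolar]
  ring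

theorem apolar_hessian_partialY :
    Apolar (P.b ^ 2 - 3 * P.c * P.a) (P.b * P.c - 9 * P.d * P.a) (P.c ^ 2 - 3 * P.d * P.b)
      P.b (2 * P.c) (3 * P.d) := by
  rw [Apolar]
  ring

end Hessian

section Vieta

variable {R : Type*} [CommRing R] {x y w a b c : R}

theorem discr_monic_eq_prod_roots (ha : a = -(x + y + w)) (hb : b = x * y + x * w + y * w)
    (hc : c = -(x * y * w)) :
    (⟨1, a, b, c⟩ : Cubic R).discr = ((x - y) * (x - w) * (y - w)) ^ 2 := by
  subst ha hb hc
  rw [Cubic.discr]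
  ring

theorem hessian_eq_mul_resolvents {e f : R} (hadd : e + f = 1) (hmul : e * f = 1)
    (ha : a = -(x + y + w)) (hb : b = x * y + x * w + y * w) (hc : c = -(x * y * w)) (z : R) :
    (a ^ 2 - 3 * b) * (z * z) + (a * b - 9 * c) * z + (b ^ 2 - 3 * c * a) =
      ((x * e + y * f - w) * z + (x * w * f + y * w * e - x * y)) *
        ((x * f + y * e - w) * z + (x * w * e + y * w * f - x * y)) := by
  obtain rfl : f = 1 - e := eq_sub_of_add_eq' hadd
  subst ha hb hc
  linear_combination -((x - y) ^ 2 * (z - w) ^ 2) * hmul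

end Vieta

theorem harmonicConjugate_hessian_resolvent_root {K : Type*} [Field K] {x y w a b c e f : K}
    (hadd : e + f = 1) (hmul : e * f = 1) (ha : a = -(x + y + w))
    (hb : b = x * y + x * w + y * w) (hc : c = -(x * y * w))
    (hdisc : discrim (a ^ 2 - 3 * b) (a * b - 9 * c) (b ^ 2 - 3 * c * a) ≠ 0)
    (hL : x * e + y * f + w * -1 ≠ 0) :
    harmonicConjugate (a ^ 2 - 3 * b) (a * b - 9 * c) (b ^ 2 - 3 * c * a)
        (-((x * y * -1 + x * w * f + y * w * e) / (x * e + y * f + w * -1))) =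
      -((x * y * -1 + x * w * f + y * w * e) / (x * e + y * f + w * -1)) := by
  refine harmonicConjugate_eq_self_of_root hdisc ?_
  rw [hessian_eq_mul_resolvents hadd hmul ha hb hc]
  refine mul_eq_zero_of_left ?_ _
  linear_combination -div_mul_cancel₀ (x * y * -1 + x * w * f + y * w * e) hL

theorem add_inv_eq_one_of_isPrimitiveRoot_six {K : Type*} [Field K] {ζ : K}
    (hζ : IsPrimitiveRoot ζ 6) : ζ + ζ⁻¹ = 1 := by
  have hroot : ζ ^ 2 - ζ + 1 = 0 := by
    simpa [Polynomial.cyclotomic_six] using hζ.isRoot_cyclotomic (by norm_num)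
  field_simp [hζ.ne_zero (by norm_num)]
  linear_combination hroot

theorem stmt_14_general {K : Type*} [Field K] [NeZero (3 : K)]
    (α₁ α₂ α₃ e₁ e₂ e₃ a b c u v Δ : K) (Q G : K → K)
    (hadd : e₁ + e₂ = 1) (hmul : e₁ * e₂ = 1)
    (he₃ : e₃ = -1)
    (h12 : α₁ ≠ α₂) (h13 : α₁ ≠ α₃) (h23 : α₂ ≠ α₃)
    (ha : a = -(α₁ + α₂ + α₃))
    (hb : b = α₁ * α₂ + α₁ * α₃ + α₂ * α₃)
    (hc : c = -(α₁ * α₂ * α₃))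
    (hQ : ∀ z, Q z = -((a * z ^ 2 + 2 * b * z + 3 * c) / (3 * z ^ 2 + 2 * a * z + b)))
    (hG : ∀ z, G z = -(((a * b - 9 * c) * z + 2 * (b ^ 2 - 3 * c * a)) /
      (2 * (a ^ 2 - 3 * b) * z + (a * b - 9 * c))))
    (hΔ : Δ = a ^ 2 * b ^ 2 - 4 * b ^ 3 - 4 * a ^ 3 * c - 27 * c ^ 2 + 18 * a * b * c)
    (hu : u = -((α₁ * α₂ * e₃ + α₁ * α₃ * e₂ + α₂ * α₃ * e₁) /
      (α₁ * e₁ + α₂ * e₂ + α₃ * e₃)))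
    (hv : v = -((α₁ * α₂ * e₃ + α₁ * α₃ * e₁ + α₂ * α₃ * e₂) /
      (α₁ * e₂ + α₂ * e₁ + α₃ * e₃))) :
    (∀ z : K, 2 * (a ^ 2 - 3 * b) * z + (a * b - 9 * c) ≠ 0 →
      (a * (G z) ^ 2 + 2 * b * (G z) + 3 * c =
        -(3 * Δ) * (a * z ^ 2 + 2 * b * z + 3 * c) /
          (2 * (a ^ 2 - 3 * b) * z + (a * b - 9 * c)) ^ 2 ∧
       3 * (G z) ^ 2 + 2 * a * (G z) + b =
        -(3 * Δ) * (3 * z ^ 2 + 2 * a * z + b) /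
          (2 * (a ^ 2 - 3 * b) * z + (a * b - 9 * c)) ^ 2 ∧
       (3 * z ^ 2 + 2 * a * z + b ≠ 0 → Q (G z) = Q z))) ∧
    (α₁ * e₁ + α₂ * e₂ + α₃ * e₃ ≠ 0 → G u = u) ∧
    (α₁ * e₂ + α₂ * e₁ + α₃ * e₃ ≠ 0 → G v = v) := by
  have hP : (⟨1, a, b, c⟩ : Cubic K).discr = Δ := by rw [hΔ, Cubic.discr]; ring
  have hdisc : discrim (a ^ 2 - 3 * b) (a * b - 9 * c) (b ^ 2 - 3 * c * a) = -(3 * Δ) := by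
    simpa only [mul_one, hP] using discrim_hessian (⟨1, a, b, c⟩ : Cubic K)
  have hX : Apolar (a ^ 2 - 3 * b) (a * b - 9 * c) (b ^ 2 - 3 * c * a) 3 (2 * a) b := by
    simpa only [mul_one] using apolar_hessian_partialX (⟨1, a, b, c⟩ : Cubic K)
  have hY : Apolar (a ^ 2 - 3 * b) (a * b - 9 * c) (b ^ 2 - 3 * c * a) a (2 * b) (3 * c) := by
    simpa only [mul_one] using apolar_hessian_partialY (⟨1, a, b, c⟩ : Cubic K)
  have hdisc_ne : discrim (a ^ 2 - 3 * b) (a * b - 9 * c) (b ^ 2 - 3 * c * a) ≠ 0 := by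
    rw [hdisc, ← hP, discr_monic_eq_prod_roots ha hb hc]
    simp [sub_eq_zero, h12, h13, h23, NeZero.ne]
  obtain rfl : G = harmonicConjugate (a ^ 2 - 3 * b) (a * b - 9 * c) (b ^ 2 - 3 * c * a) :=
    funext hG
  subst he₃ hu hv
  refine ⟨fun z hz ↦ ⟨?_, ?_, fun _ ↦ ?_⟩,
    harmonicConjugate_hessian_resolvent_root hadd hmul ha hb hc hdisc_ne,
    harmonicConjugate_hessian_resolvent_root
      (by rwa [add_comm]) (by rwa [mul_comm]) ha hb hc hdisc_ne⟩
  · rw [hY.eval_harmonicConjugate hz, hdisc]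
  · rw [hX.eval_harmonicConjugate hz, hdisc]
  · rw [hQ, hQ z, hY.div_eval_harmonicConjugate hX hdisc_ne hz]

theorem isPrimitiveRoot_exp_pi_div_three :
    IsPrimitiveRoot (Complex.exp ((Real.pi : ℂ) / 3 * Complex.I)) 6 := by
  convert Complex.isPrimitiveRoot_exp 6 (by norm_num) using 2
  push_cast
  ring

theorem stmt_14 (α₁ α₂ α₃ e₁ e₂ e₃ a b c u v Δ : ℂ) (Q G : ℂ → ℂ)
    (he₁ : e₁ = Complex.exp (-(Real.pi : ℂ) / 3 * Complex.I))
    (he₂ : e₂ = Complex.exp ((Real.pi : ℂ) / 3 * Complex.I))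
    (he₃ : e₃ = -1)
    (h12 : α₁ ≠ α₂) (h13 : α₁ ≠ α₃) (h23 : α₂ ≠ α₃)
    (ha : a = -(α₁ + α₂ + α₃))
    (hb : b = α₁ * α₂ + α₁ * α₃ + α₂ * α₃)
    (hc : c = -(α₁ * α₂ * α₃))
    (hQ : ∀ z, Q z = -((a * z ^ 2 + 2 * b * z + 3 * c) / (3 * z ^ 2 + 2 * a * z + b)))
    (hG : ∀ z, G z = -(((a * b - 9 * c) * z + 2 * (b ^ 2 - 3 * c * a)) /
      (2 * (a ^ 2 - 3 * b) * z + (a * b - 9 * c))))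
    (hΔ : Δ = a ^ 2 * b ^ 2 - 4 * b ^ 3 - 4 * a ^ 3 * c - 27 * c ^ 2 + 18 * a * b * c)
    (hu : u = -((α₁ * α₂ * e₃ + α₁ * α₃ * e₂ + α₂ * α₃ * e₁) /
      (α₁ * e₁ + α₂ * e₂ + α₃ * e₃)))
    (hv : v = -((α₁ * α₂ * e₃ + α₁ * α₃ * e₁ + α₂ * α₃ * e₂) /
      (α₁ * e₂ + α₂ * e₁ + α₃ * e₃))) :
    (∀ z : ℂ, 2 * (a ^ 2 - 3 * b) * z + (a * b - 9 * c) ≠ 0 →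
      (a * (G z) ^ 2 + 2 * b * (G z) + 3 * c =
        -(3 * Δ) * (a * z ^ 2 + 2 * b * z + 3 * c) /
          (2 * (a ^ 2 - 3 * b) * z + (a * b - 9 * c)) ^ 2 ∧
       3 * (G z) ^ 2 + 2 * a * (G z) + b =
        -(3 * Δ) * (3 * z ^ 2 + 2 * a * z + b) /
          (2 * (a ^ 2 - 3 * b) * z + (a * b - 9 * c)) ^ 2 ∧
       (3 * z ^ 2 + 2 * a * z + b ≠ 0 → Q (G z) = Q z))) ∧
    (α₁ * e₁ + α₂ * e₂ + α₃ * e₃ ≠ 0 → α₁ * e₂ + α₂ * e₁ + α₃ * e₃ ≠ 0 →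
      G u = u ∧ G v = v) := by
  obtain ⟨hidentities, hu_fixed, hv_fixed⟩ := stmt_14_general α₁ α₂ α₃ e₁ e₂ e₃ a b c u v Δ Q G
    (by rw [he₁, he₂, exp_neg_pi_div_three_add_exp_pi_div_three])
    (by rw [he₁, he₂, exp_neg_pi_div_three_mul_exp_pi_div_three])
    he₃ h12 h13 h23 ha hb hc hQ hG hΔ hu hv
  exact ⟨hidentities, fun hL hL' ↦ ⟨hu_fixed hL, hv_fixed hL'⟩⟩
end
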